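/- Let R be a ring in which every nonzero two-sided ideal contains a nonzero idempotent. Then the intersection of all prime two-sided ideals of R is zero; equivalently, R is a subdirect product of the quotient rings R/P taken over all prime two-sided ideals P. -/

import Mathlib

/-- If every nonzero two-sided ideal of a ring `R` contains a nonzero idempotent, then the
intersection of all prime two-sided ideals of `R` is zero (equivalently, `R` is a subdirect
product of the quotients `R/P` over all prime two-sided ideals `P`).  Here a two-sided
ideal `P` is prime if `a * r * b ∈ P` for all `r : R` implies `a ∈ P` or `b ∈ P`. -/
theorem intersection_of_primes_eq_bot_of_idempotents {R : Type*} [Ring R]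
    (h : ∀ I : TwoSidedIdeal R, I ≠ ⊥ → ∃ e : R, e ∈ I ∧ e ≠ 0 ∧ e * e = e) :
    ∀ x : R,
      (∀ P : TwoSidedIdeal R,
        (∀ a b : R, (∀ r : R, a * r * b ∈ P) → a ∈ P ∨ b ∈ P) → x ∈ P) →
      x = 0 := by
  intro x hx
  by_contra hx0
  have hne : TwoSidedIdeal.span {x} ≠ ⊥ := by
    intro hb
    have : x ∈ TwoSidedIdeal.span {x} := TwoSidedIdeal.subset_span rfl
    rw [hb] at this
    exact hx0 ((TwoSidedIdeal.mem_bot R).1 this)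
  obtain ⟨e, heI, he0, hee⟩ := h _ hne
  obtain ⟨P, -, hP⟩ := zorn_le_nonempty₀ {I : TwoSidedIdeal R | e ∉ I} (by
    intro c hc hchain y hy
    have dir : ∀ {u v : R}, (∃ I ∈ c, u ∈ I) → (∃ I ∈ c, v ∈ I) →
        ∃ I ∈ c, u ∈ I ∧ v ∈ I := by
      rintro u v ⟨I, hI, hu⟩ ⟨J, hJ, hv⟩
      rcases hchain.total hI hJ with hle | hle
      · exact ⟨J, hJ, hle hu, hv⟩
      · exact ⟨I, hI, hu, hle hv⟩
    refine ⟨TwoSidedIdeal.mk' {z | ∃ I ∈ c, z ∈ I} ⟨y, hy, y.zero_mem⟩ ?_ ?_ ?_ ?_, ?_, ?_⟩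
    · intro u v hu hv
      obtain ⟨I, hI, h1, h2⟩ := dir hu hv
      exact ⟨I, hI, I.add_mem h1 h2⟩
    · rintro u ⟨I, hI, h1⟩
      exact ⟨I, hI, I.neg_mem h1⟩
    · rintro u v ⟨I, hI, h1⟩
      exact ⟨I, hI, I.mul_mem_left _ _ h1⟩
    · rintro u v ⟨I, hI, h1⟩
      exact ⟨I, hI, I.mul_mem_right _ _ h1⟩
    · intro hmem
      rw [TwoSidedIdeal.mem_mk'] at hmem
      obtain ⟨I, hI, h1⟩ := hmem
      exact hc hI h1
    · intro I hI z hz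
      rw [TwoSidedIdeal.mem_mk']
      exact ⟨I, hI, hz⟩) ⊥ (fun hb => he0 ((TwoSidedIdeal.mem_bot R).1 hb))
  have heP : e ∉ P := hP.prop
  have key : ∀ (J : TwoSidedIdeal R) (a : R), P ≤ J → a ∈ J → a ∉ P → e ∈ J := by
    intro J a hJ haJ haP
    by_contra heJ
    exact haP (hP.le_of_ge heJ hJ haJ)
  have hxP : x ∈ P := by
    apply hx
    intro a b hab
    by_contra! hcon
    obtain ⟨haP, hbP⟩ := hcon
    have h1 : ∀ r, e * r * b ∈ P := by
      have := key (TwoSidedIdeal.mk' {y | ∀ r, y * r * b ∈ P}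
        (by intro r; simpa using P.zero_mem)
        (by intro u v hu hv r; simpa [add_mul] using P.add_mem (hu r) (hv r))
        (by intro u hu r; simpa using P.neg_mem (hu r))
        (by intro u v hv r; simpa [mul_assoc] using P.mul_mem_left u _ (hv r))
        (by intro u v hu r; simpa [mul_assoc] using hu (v * r))) a
        (by
          intro z hz
          rw [TwoSidedIdeal.mem_mk']
          intro r
          exact P.mul_mem_right _ _ (P.mul_mem_right _ _ hz))
        (by rw [TwoSidedIdeal.mem_mk']; exact hab) haP
      rw [TwoSidedIdeal.mem_mk'] at this
      exact this
    have h2 : ∀ r, e * r * e ∈ P := by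
      have := key (TwoSidedIdeal.mk' {y | ∀ r, e * r * y ∈ P}
        (by intro r; simpa using P.zero_mem)
        (by intro u v hu hv r; simpa [mul_add] using P.add_mem (hu r) (hv r))
        (by intro u hu r; simpa using P.neg_mem (hu r))
        (by intro u v hv r; simpa [mul_assoc] using hv (r * u))
        (by intro u v hu r; simpa [mul_assoc] using P.mul_mem_right _ v (hu r))) b
        (by
          intro z hz
          rw [TwoSidedIdeal.mem_mk']
          intro r
          exact P.mul_mem_left _ _ hz)
        (by rw [TwoSidedIdeal.mem_mk']; exact h1) hbP
      rw [TwoSidedIdeal.mem_mk'] at this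
      exact this
    apply heP
    simpa [hee] using h2 1
  have hle : TwoSidedIdeal.span {x} ≤ P := by
    rw [TwoSidedIdeal.span_le]
    simpa using hxP
  exact heP (hle heI)
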